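/- Let F be an algebraically closed field of characteristic zero, n ≥ 1, and p, q ≥ 1. If A is a subsuperalgebra of Q(n) that is isomorphic as a superalgebra to osp(p,q), then dim_F A ≤ (n² + n)/2. -/

import Mathlib

open Matrix

namespace SJ

section SuperDefs

variable {F : Type*} [Field F] {J : Type*} [AddCommGroup J] [Module F J]

/-- A graded subspace: `A = (A ∩ J₀) ⊕ (A ∩ J₁)`. -/
def IsGradedG (ev od : Submodule F J) (A : Submodule F J) : Prop :=
  A = (A ⊓ ev) ⊔ (A ⊓ od)

/-- A subsuperalgebra: a graded subspace closed under the product. -/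
def IsSubalgG (mul : J → J → J) (ev od : Submodule F J) (A : Submodule F J) : Prop :=
  IsGradedG ev od A ∧ ∀ x ∈ A, ∀ y ∈ A, mul x y ∈ A

/-- Nontrivial: `A ∩ J₁ ≠ {0}`. -/
def NontrivG (od : Submodule F J) (A : Submodule F J) : Prop := A ⊓ od ≠ ⊥

/-- Simple: `A∘A ≠ 0` and the only graded subspaces `I ⊆ A` with `A∘I ⊆ I` are `0` and `A`. -/
def IsSimpleG (mul : J → J → J) (ev od : Submodule F J) (A : Submodule F J) : Prop :=
  (∃ x ∈ A, ∃ y ∈ A, mul x y ≠ 0) ∧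
  ∀ I : Submodule F J, I ≤ A → IsGradedG ev od I →
    (∀ x ∈ A, ∀ y ∈ I, mul x y ∈ I) → I = ⊥ ∨ I = A

/-- An isomorphism of superalgebras: an F-linear bijection mapping even part onto even
part, odd part onto odd part, and preserving the product. -/
def SuperIsoG {J₂ : Type*} [AddCommGroup J₂] [Module F J₂]
    (mul₁ : J → J → J) (ev₁ od₁ : Submodule F J)
    (mul₂ : J₂ → J₂ → J₂) (ev₂ od₂ : Submodule F J₂)
    (A : Submodule F J) (B : Submodule F J₂) : Prop :=
  ∃ e : A ≃ₗ[F] B,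
    (∀ x : A, (x : J) ∈ ev₁ ↔ (e x : J₂) ∈ ev₂) ∧
    (∀ x : A, (x : J) ∈ od₁ ↔ (e x : J₂) ∈ od₂) ∧
    ∀ x y z : A, mul₁ x y = (z : J) → mul₂ (e x) (e y) = (e z : J₂)

end SuperDefs

/-- The space of (n+m)×(n+m) matrices, indices split into even (`inl`) and odd (`inr`) ones. -/
abbrev MJ (F : Type*) [Field F] (n m : ℕ) :=
  Matrix (Fin n ⊕ Fin m) (Fin n ⊕ Fin m) F

/-- Parity of an index. -/
def pty {n m : ℕ} : Fin n ⊕ Fin m → Bool := Sum.elim (fun _ => false) (fun _ => true)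

variable (F : Type*) [Field F]

/-- The odd component of a matrix (block-antidiagonal part). -/
def oddPart {n m : ℕ} (X : MJ F n m) : MJ F n m :=
  Matrix.of fun i j => if pty i = pty j then 0 else X i j

/-- The even component of a matrix (block-diagonal part). -/
def evenPart {n m : ℕ} (X : MJ F n m) : MJ F n m :=
  Matrix.of fun i j => if pty i = pty j then X i j else 0

variable {F}

/-- The super-Jordan product on `M_{n,m}(F)^{(+)}`:  `x∘y = (xy+yx)/2` when `x` or `y` is
even and `x∘y = (xy−yx)/2` when both are odd, extended bilinearly.  (For arbitrary
matrices this bilinear extension equals `(xy+yx)/2 − y₁x₁` where `x₁, y₁` are the odd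
components.) -/
def jmul {n m : ℕ} (X Y : MJ F n m) : MJ F n m :=
  (2 : F)⁻¹ • (X * Y + Y * X) - oddPart F Y * oddPart F X

variable (F)

/-- The even part `J₀` of `M_{n,m}(F)^{(+)}`: block-diagonal matrices. -/
def evenSub (n m : ℕ) : Submodule F (MJ F n m) where
  carrier := {X | ∀ i j, pty i ≠ pty j → X i j = 0}
  zero_mem' := by intro i j _; simp
  add_mem' := by
    intro a b ha hb i j h
    simp only [Matrix.add_apply, ha i j h, hb i j h, add_zero]
  smul_mem' := by
    intro c a ha i j h
    simp only [Matrix.smul_apply, ha i j h, smul_zero]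

/-- The odd part `J₁` of `M_{n,m}(F)^{(+)}`: block-antidiagonal matrices. -/
def oddSub (n m : ℕ) : Submodule F (MJ F n m) where
  carrier := {X | ∀ i j, pty i = pty j → X i j = 0}
  zero_mem' := by intro i j _; simp
  add_mem' := by
    intro a b ha hb i j h
    simp only [Matrix.add_apply, ha i j h, hb i j h, add_zero]
  smul_mem' := by
    intro c a ha i j h
    simp only [Matrix.smul_apply, ha i j h, smul_zero]

/-- Statements about `M_{n,m}(F)^{(+)}` specialized from the generic definitions. -/
abbrev IsGraded {n m : ℕ} (A : Submodule F (MJ F n m)) : Prop :=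
  IsGradedG (evenSub F n m) (oddSub F n m) A

abbrev IsSubalg {n m : ℕ} (A : Submodule F (MJ F n m)) : Prop :=
  IsSubalgG jmul (evenSub F n m) (oddSub F n m) A

abbrev Nontriv {n m : ℕ} (A : Submodule F (MJ F n m)) : Prop :=
  NontrivG (oddSub F n m) A

abbrev IsSimple {n m : ℕ} (A : Submodule F (MJ F n m)) : Prop :=
  IsSimpleG jmul (evenSub F n m) (oddSub F n m) A

abbrev SuperIso {n₁ m₁ n₂ m₂ : ℕ}
    (A : Submodule F (MJ F n₁ m₁)) (B : Submodule F (MJ F n₂ m₂)) : Prop :=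
  SuperIsoG jmul (evenSub F n₁ m₁) (oddSub F n₁ m₁)
    jmul (evenSub F n₂ m₂) (oddSub F n₂ m₂) A B

/-- The standard symplectic matrix `S = [[0, I_q],[−I_q, 0]]` of size `2q`. -/
def SMat (q : ℕ) : Matrix (Fin (2 * q)) (Fin (2 * q)) F :=
  Matrix.of fun i j =>
    if (j : ℕ) = (i : ℕ) + q then (1 : F) else if (i : ℕ) = (j : ℕ) + q then -1 else 0

/-- `osp(p,q)`: block matrices `[[A, C],[S⁻¹Cᵀ, D]]` inside `M_{p,2q}(F)^{(+)}` with
`A` symmetric, `C` arbitrary and `Dᵀ S = S D`.  The condition on the lower-left block is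
recorded in the equivalent form `S · C₂₁ = C₁₂ᵀ`. -/
def ospSub (p q : ℕ) : Submodule F (MJ F p (2 * q)) where
  carrier := {X | (X.toBlocks₁₁)ᵀ = X.toBlocks₁₁ ∧
    SMat F q * X.toBlocks₂₁ = (X.toBlocks₁₂)ᵀ ∧
    (X.toBlocks₂₂)ᵀ * SMat F q = SMat F q * X.toBlocks₂₂}
  zero_mem' := by
    refine ⟨?_, ?_, ?_⟩ <;> ext i j <;>
      simp [Matrix.toBlocks₁₁, Matrix.toBlocks₁₂, Matrix.toBlocks₂₁, Matrix.toBlocks₂₂,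
        Matrix.mul_apply]
  add_mem' := by
    rintro a b ⟨ha1, ha2, ha3⟩ ⟨hb1, hb2, hb3⟩
    have e11 : (a + b).toBlocks₁₁ = a.toBlocks₁₁ + b.toBlocks₁₁ := rfl
    have e12 : (a + b).toBlocks₁₂ = a.toBlocks₁₂ + b.toBlocks₁₂ := rfl
    have e21 : (a + b).toBlocks₂₁ = a.toBlocks₂₁ + b.toBlocks₂₁ := rfl
    have e22 : (a + b).toBlocks₂₂ = a.toBlocks₂₂ + b.toBlocks₂₂ := rfl
    refine ⟨?_, ?_, ?_⟩
    · rw [e11, Matrix.transpose_add, ha1, hb1]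
    · rw [e21, e12, Matrix.mul_add, Matrix.transpose_add, ha2, hb2]
    · rw [e22, Matrix.transpose_add, Matrix.add_mul, Matrix.mul_add, ha3, hb3]
  smul_mem' := by
    rintro c a ⟨ha1, ha2, ha3⟩
    have e11 : (c • a).toBlocks₁₁ = c • a.toBlocks₁₁ := rfl
    have e12 : (c • a).toBlocks₁₂ = c • a.toBlocks₁₂ := rfl
    have e21 : (c • a).toBlocks₂₁ = c • a.toBlocks₂₁ := rfl
    have e22 : (c • a).toBlocks₂₂ = c • a.toBlocks₂₂ := rfl
    refine ⟨?_, ?_, ?_⟩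
    · rw [e11, Matrix.transpose_smul, ha1]
    · rw [e21, e12, Matrix.mul_smul, Matrix.transpose_smul, ha2]
    · rw [e22, Matrix.transpose_smul, Matrix.smul_mul, Matrix.mul_smul, ha3]

/-- `Q(n)`: matrices `[[A, B],[B, A]]` inside `M_{n,n}(F)^{(+)}`. -/
def QSub (n : ℕ) : Submodule F (MJ F n n) where
  carrier := {X | (∀ i j, X (Sum.inr i) (Sum.inr j) = X (Sum.inl i) (Sum.inl j)) ∧
    (∀ i j, X (Sum.inr i) (Sum.inl j) = X (Sum.inl i) (Sum.inr j))}
  zero_mem' := by constructor <;> intro i j <;> simp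
  add_mem' := by
    rintro a b ⟨ha1, ha2⟩ ⟨hb1, hb2⟩
    constructor <;> intro i j <;>
      simp only [Matrix.add_apply, ha1 i j, ha2 i j, hb1 i j, hb2 i j]
  smul_mem' := by
    rintro c a ⟨ha1, ha2⟩
    constructor <;> intro i j <;>
      simp only [Matrix.smul_apply, ha1 i j, ha2 i j]

/-- `P(n)`: matrices `[[A, B],[C, Aᵀ]]` with `B` symmetric and `C` skew-symmetric,
inside `M_{n,n}(F)^{(+)}`. -/
def PSub (n : ℕ) : Submodule F (MJ F n n) where
  carrier := {X | (∀ i j, X (Sum.inr i) (Sum.inr j) = X (Sum.inl j) (Sum.inl i)) ∧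
    (∀ i j, X (Sum.inl i) (Sum.inr j) = X (Sum.inl j) (Sum.inr i)) ∧
    (∀ i j, X (Sum.inr i) (Sum.inl j) = - X (Sum.inr j) (Sum.inl i))}
  zero_mem' := by refine ⟨?_, ?_, ?_⟩ <;> intro i j <;> simp
  add_mem' := by
    rintro a b ⟨ha1, ha2, ha3⟩ ⟨hb1, hb2, hb3⟩
    refine ⟨?_, ?_, ?_⟩ <;> intro i j <;>
      simp only [Matrix.add_apply, ha1 i j, ha2 i j, ha3 i j, hb1 i j, hb2 i j, hb3 i j] <;>
      ring
  smul_mem' := by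
    rintro c a ⟨ha1, ha2, ha3⟩
    refine ⟨?_, ?_, ?_⟩ <;> intro i j <;>
      simp only [Matrix.smul_apply, ha1 i j, ha2 i j, ha3 i j, smul_neg]


section Helpers

variable {F}

def k1 {q : ℕ} (k : Fin q) : Fin (2 * q) := ⟨k, by omega⟩
def k2 {q : ℕ} (k : Fin q) : Fin (2 * q) := ⟨k + q, by omega⟩

lemma S_mul_k1 {q : ℕ} {β : Type*} [DecidableEq β] (k : Fin q) (j : β) :
    SMat F q * Matrix.single (k1 k) j (1:F) = - Matrix.single (k2 k) j (1:F) := by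
  ext a b
  by_cases hb : j = b
  · subst hb
    have := a.2
    have := k.2
    simp only [Matrix.mul_single_apply_same, SMat, Matrix.of_apply, Matrix.neg_apply,
      Matrix.single_apply, k1, k2, Fin.ext_iff, mul_one, and_true]
    split_ifs <;> first | omega | simp
  · simp [Matrix.mul_apply, Matrix.single_apply, hb]

lemma S_mul_k2 {q : ℕ} {β : Type*} [DecidableEq β] (k : Fin q) (j : β) :
    SMat F q * Matrix.single (k2 k) j (1:F) = Matrix.single (k1 k) j (1:F) := by
  ext a b
  by_cases hb : j = b
  · subst hb
    have := a.2
    have := k.2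
    simp only [Matrix.mul_single_apply_same, SMat, Matrix.of_apply, 
      Matrix.single_apply, k1, k2, Fin.ext_iff, mul_one, and_true]
    split_ifs <;> first | omega | simp
  · simp [Matrix.mul_apply, Matrix.single_apply, hb]

lemma S_transpose (q : ℕ) : (SMat F q)ᵀ = - SMat F q := by
  ext a b
  simp only [Matrix.transpose_apply, SMat, Matrix.of_apply, Matrix.neg_apply]
  have := a.2
  have := b.2
  split_ifs <;> first | omega | simp

lemma sum_single (q : ℕ) :
    ∑ k : Fin q, (Matrix.single (k1 k) (k1 k) (1:F) + Matrix.single (k2 k) (k2 k) 1) = 1 := by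
  ext a b
  rw [Matrix.sum_apply]
  by_cases hab : a = b
  · subst hab
    simp only [Matrix.add_apply, Matrix.single_apply, and_self, Matrix.one_apply_eq]
    have ha := a.2
    by_cases h : (a : ℕ) < q
    · rw [Finset.sum_eq_single ⟨a, h⟩]
      · simp [k1, k2, Fin.ext_iff]; intro h; omega
      · intro b _ hb
        simp only [k1, k2, Fin.ext_iff, ne_eq] at *
        rw [if_neg hb, if_neg (by omega)]; simp
      · simp
    · rw [Finset.sum_eq_single ⟨a - q, by omega⟩]
      · simp only [k1, k2, Fin.ext_iff]
        rw [if_neg (by omega), if_pos (by omega)]; simp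
      · intro b _ hb
        simp only [k1, k2, Fin.ext_iff, ne_eq] at *
        rw [if_neg (by omega), if_neg (by omega)]; simp
      · simp
  · rw [Matrix.one_apply_ne hab]
    apply Finset.sum_eq_zero
    intro k _
    simp only [Matrix.add_apply, Matrix.single_apply]
    rw [if_neg (by rintro ⟨h1, h2⟩; exact hab (h1.symm.trans h2)),
      if_neg (by rintro ⟨h1, h2⟩; exact hab (h1.symm.trans h2))]
    simp

lemma S_sq (q : ℕ) : SMat F q * SMat F q = - 1 := by
  have : SMat F q * (SMat F q * 1) = - 1 := by
    rw [← sum_single q, Matrix.mul_sum, Matrix.mul_sum, ← Finset.sum_neg_distrib]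
    refine Finset.sum_congr rfl fun k _ => ?_
    simp only [mul_add, S_mul_k1, S_mul_k2, Matrix.mul_neg, neg_add]
  simpa using this

lemma S_inj {q : ℕ} {β : Type*} (M : Matrix (Fin (2*q)) β F) (h : SMat F q * M = 0) : M = 0 := by
  have h2 : SMat F q * (SMat F q * M) = 0 := by rw [h, Matrix.mul_zero]
  rw [← Matrix.mul_assoc, S_sq, Matrix.neg_mul, Matrix.one_mul] at h2
  exact neg_eq_zero.mp h2

/-- The form matrix applied to an element of `osp`. -/
def GX {p q : ℕ} : MJ F p (2*q) →ₗ[F] MJ F p (2*q) :=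
  LinearMap.mulLeft F (Matrix.fromBlocks 1 0 0 (SMat F q))

lemma GX_symm {p q : ℕ} (X : MJ F p (2*q)) (hX : X ∈ ospSub F p q) (i j) 
    (h : GX X i j = 0) : GX X j i = 0 := by
  obtain ⟨h1, h2, h3⟩ := hX
  have hG : GX X = Matrix.fromBlocks X.toBlocks₁₁ X.toBlocks₁₂ (X.toBlocks₁₂)ᵀ
      (SMat F q * X.toBlocks₂₂) := by
    conv_lhs => rw [← Matrix.fromBlocks_toBlocks X]
    simp [GX, Matrix.fromBlocks_multiply, h2]
  have h4 : (SMat F q * X.toBlocks₂₂)ᵀ = - (SMat F q * X.toBlocks₂₂) := by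
    rw [Matrix.transpose_mul, S_transpose, Matrix.mul_neg, h3]
  rw [hG] at h ⊢
  rcases i with i | i <;> rcases j with j | j
  · simp only [Matrix.fromBlocks_apply₁₁] at *
    rw [← h1]; exact h
  · simpa using h
  · simpa using h
  · simp only [Matrix.fromBlocks_apply₂₂] at *
    have := congrFun (congrFun h4 i) j
    rw [Matrix.transpose_apply, Matrix.neg_apply, h] at this
    simpa using this

lemma GX_inj {p q : ℕ} (X : MJ F p (2*q)) (h : GX X = 0) : X = 0 := by
  have h1 : Matrix.fromBlocks (1 : Matrix (Fin p) (Fin p) F) 0 0 (-SMat F q) * GX X = X := by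
    simp [GX, ← Matrix.mul_assoc, Matrix.fromBlocks_multiply, S_sq]
  rw [← h1, h, Matrix.mul_zero]

lemma finrank_osp (p q : ℕ) :
    Module.finrank F (ospSub F p q) ≤ (p + 2 * q + 1).choose 2 := by
  let T : ospSub F p q →ₗ[F] (Sym2 (Fin p ⊕ Fin (2*q)) → F) :=
    LinearMap.pi fun s => (Matrix.entryLinearMap F F s.out.1 s.out.2) ∘ₗ GX ∘ₗ (ospSub F p q).subtype
  have hT : Function.Injective T := by
    rw [← LinearMap.ker_eq_bot, LinearMap.ker_eq_bot']
    intro X hX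
    apply Subtype.ext
    apply GX_inj
    ext i j
    have h := congrFun hX s(i, j)
    have h' : GX (X : MJ F p (2*q)) (s(i,j) : Sym2 _).out.1 (s(i,j) : Sym2 _).out.2 = 0 := h
    have h2 : s((s(i,j) : Sym2 _).out.1, (s(i,j) : Sym2 _).out.2) = s(i,j) := Quot.out_eq _
    rcases Sym2.eq_iff.mp h2 with ⟨ha, hb⟩ | ⟨ha, hb⟩
    · rw [ha, hb] at h'; exact h'
    · rw [ha, hb] at h'; exact GX_symm _ X.2 _ _ h'
  have := LinearMap.finrank_le_finrank_of_injective hT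
  rw [Module.finrank_fintype_fun_eq_card, Sym2.card] at this
  simpa using this

lemma fb_even {n m : ℕ} (a : Matrix (Fin n) (Fin n) F) (d : Matrix (Fin m) (Fin m) F) :
    Matrix.fromBlocks a 0 0 d ∈ evenSub F n m := by
  intro i j h
  rcases i with i | i <;> rcases j with j | j <;> simp_all [pty]

lemma fb_odd {n m : ℕ} (b : Matrix (Fin n) (Fin m) F) (c : Matrix (Fin m) (Fin n) F) :
    Matrix.fromBlocks 0 b c 0 ∈ oddSub F n m := by
  intro i j h
  rcases i with i | i <;> rcases j with j | j <;> simp_all [pty]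

lemma oddPart_even {n m : ℕ} {X : MJ F n m} (h : X ∈ evenSub F n m) : oddPart F X = 0 := by
  ext i j
  simp only [oddPart, Matrix.of_apply, Matrix.zero_apply]
  split_ifs with h1
  · rfl
  · exact h i j h1

lemma oddPart_odd {n m : ℕ} {X : MJ F n m} (h : X ∈ oddSub F n m) : oddPart F X = X := by
  ext i j
  simp only [oddPart, Matrix.of_apply]
  split_ifs with h1
  · exact (h i j h1).symm
  · rfl

lemma jmul_even_self [CharZero F] {n m : ℕ} {X : MJ F n m} (h : X ∈ evenSub F n m) :
    jmul X X = X * X := by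
  rw [jmul, oddPart_even h, Matrix.zero_mul, sub_zero, ← two_smul F (X * X), smul_smul,
    inv_mul_cancel₀ two_ne_zero, one_smul]

lemma jmul_odd [CharZero F] {n m : ℕ} {X Y : MJ F n m} (hX : X ∈ oddSub F n m)
    (hY : Y ∈ oddSub F n m) :
    jmul X Y = (2:F)⁻¹ • (X * Y - Y * X) := by
  rw [jmul, oddPart_odd hX, oddPart_odd hY]
  have : Y * X = (2:F)⁻¹ • ((2:F) • (Y * X)) := by
    rw [smul_smul, inv_mul_cancel₀ two_ne_zero, one_smul]
  nth_rewrite 2 [this]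
  rw [← smul_sub, two_smul]
  congr 1
  abel

lemma trace_idem [CharZero F] {n : ℕ} (P : Matrix (Fin n) (Fin n) F) (h : P * P = P) :
    P.trace = (P.rank : F) := by
  have hi : IsIdempotentElem (Matrix.toLin' P) := by
    unfold IsIdempotentElem
    rw [Module.End.mul_eq_comp, ← Matrix.toLin'_mul, h]
  have := (LinearMap.IsIdempotentElem.isProj_range _ hi).trace
  rw [Matrix.trace_toLin'_eq] at this
  rw [this, Matrix.rank, Matrix.toLin'_apply']

lemma rank_zero' {n : ℕ} (P : Matrix (Fin n) (Fin n) F) (h : P.rank = 0) : P = 0 := by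
  rw [Matrix.rank, Submodule.finrank_eq_zero, LinearMap.range_eq_bot, ← Matrix.toLin'_apply'] at h
  simpa using h

def eE {p : ℕ} (q : ℕ) (i : Fin p) : MJ F p (2*q) := Matrix.fromBlocks (Matrix.single i i 1) 0 0 0
def fE (p : ℕ) {q : ℕ} (k : Fin q) : MJ F p (2*q) := Matrix.fromBlocks 0 0 0
  (Matrix.single (k1 k) (k1 k) 1 + Matrix.single (k2 k) (k2 k) 1)
def xE {p q : ℕ} (i : Fin p) (k : Fin q) : MJ F p (2*q) :=
  Matrix.fromBlocks 0 (Matrix.single i (k1 k) 1) (Matrix.single (k2 k) i 1) 0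
def yE {p q : ℕ} (i : Fin p) (k : Fin q) : MJ F p (2*q) :=
  Matrix.fromBlocks 0 (Matrix.single i (k2 k) 1) (-Matrix.single (k1 k) i 1) 0

lemma eE_mem {p q : ℕ} (i : Fin p) : eE q i ∈ ospSub F p q := by
  refine ⟨?_, ?_, ?_⟩ <;> simp [eE]

lemma fE_mem {p q : ℕ} (k : Fin q) : fE p k ∈ ospSub F p q := by
  refine ⟨?_, ?_, ?_⟩
  · simp [fE]
  · simp [fE]
  · have h1 := congrArg Matrix.transpose (S_mul_k1 (F := F) k (k1 k))
    have h2 := congrArg Matrix.transpose (S_mul_k2 (F := F) k (k2 k))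
    simp only [Matrix.transpose_mul, S_transpose, Matrix.transpose_single, Matrix.transpose_neg,
      Matrix.mul_neg, neg_inj] at h1 h2
    simp only [fE, Matrix.toBlocks_fromBlocks₂₂, Matrix.transpose_add, Matrix.transpose_single,
      Matrix.add_mul, Matrix.mul_add, S_mul_k1, S_mul_k2, h1, neg_eq_iff_eq_neg.mp h2]
    abel

lemma xE_mem {p q : ℕ} (i : Fin p) (k : Fin q) : xE i k ∈ ospSub F p q := by
  refine ⟨?_, ?_, ?_⟩ <;> simp [xE, S_mul_k2]

lemma yE_mem {p q : ℕ} (i : Fin p) (k : Fin q) : yE i k ∈ ospSub F p q := by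
  refine ⟨?_, ?_, ?_⟩ <;> simp [yE, S_mul_k1]

lemma one_mem_osp {p q : ℕ} : (1 : MJ F p (2*q)) ∈ ospSub F p q := by
  rw [← Matrix.fromBlocks_one]
  refine ⟨?_, ?_, ?_⟩
  · rw [Matrix.toBlocks_fromBlocks₁₁, Matrix.transpose_one]
  · rw [Matrix.toBlocks_fromBlocks₂₁, Matrix.toBlocks_fromBlocks₁₂, Matrix.transpose_zero,
      Matrix.mul_zero]
  · rw [Matrix.toBlocks_fromBlocks₂₂, Matrix.transpose_one, Matrix.mul_one, Matrix.one_mul]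

lemma k12 {q : ℕ} (k : Fin q) : k1 k ≠ k2 k := by
  have := k.2
  simp only [k1, k2, ne_eq, Fin.ext_iff]; omega

lemma eE_sq {p q : ℕ} (i : Fin p) : (eE q i : MJ F p (2*q)) * eE q i = eE q i := by
  simp [eE, Matrix.fromBlocks_multiply]

lemma xy {p q : ℕ} (i : Fin p) (k : Fin q) :
    (xE i k : MJ F p (2*q)) * yE i k - yE i k * xE i k = (-2:F) • eE q i + fE p k := by
  simp only [xE, yE, eE, fE, Matrix.fromBlocks_multiply, Matrix.fromBlocks_smul,
    Matrix.fromBlocks_add, sub_eq_add_neg, Matrix.fromBlocks_neg]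
  have h := k12 k
  have h' := (k12 k).symm
  congr 1
  · ext a b
    simp [Matrix.single_apply]
    split_ifs <;> norm_num
  · simp
  · simp
  · simp [add_comm]

lemma sum_one {p q : ℕ} : (1 : MJ F p (2*q)) = ∑ i, eE q i + ∑ k, fE p k := by
  have h1 : ∑ i : Fin p, (eE q i : MJ F p (2*q)) = Matrix.fromBlocks 1 0 0 0 := by
    ext a b
    rw [Matrix.sum_apply]
    rcases a with a | a <;> rcases b with b | b <;>
      simp only [eE, Matrix.single_apply, Matrix.one_apply, Matrix.fromBlocks_apply₁₁,
        Matrix.fromBlocks_apply₁₂, Matrix.fromBlocks_apply₂₁, Matrix.fromBlocks_apply₂₂,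
        Matrix.zero_apply, Finset.sum_const_zero]
    by_cases hab : a = b
    · subst hab; simp only [and_self, Finset.sum_ite_eq', Finset.mem_univ, if_true]
    · rw [if_neg hab, Finset.sum_eq_zero]
      intro i _
      rw [if_neg (by rintro ⟨h1, h2⟩; exact hab (h1.symm.trans h2))]
  have h2 : ∑ k : Fin q, (fE p k : MJ F p (2*q)) = Matrix.fromBlocks 0 0 0 1 := by
    rw [← sum_single q]
    ext a b
    rw [Matrix.sum_apply]
    rcases a with a | a <;> rcases b with b | b <;> simp [fE, Matrix.sum_apply]
  rw [h1, h2, Matrix.fromBlocks_add]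
  simp

end Helpers

/-- if `A` is a subsuperalgebra of `Q(n)` isomorphic (as a superalgebra) to
`osp(p,q)` (`n, p, q ≥ 1`), then `dim_F A ≤ (n² + n)/2`. -/
theorem dim_osp_subalgebra_of_Q_le
    (F : Type*) [Field F] [IsAlgClosed F] [CharZero F]
    (n p q : ℕ) (hn : 1 ≤ n) (hp : 1 ≤ p) (hq : 1 ≤ q)
    (A : Submodule F (MJ F n n)) (hAQ : A ≤ QSub F n) (hA : IsSubalg F A)
    (hiso : SuperIso F A (ospSub F p q)) :
    Module.finrank F A ≤ (n ^ 2 + n) / 2 := by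
  obtain ⟨e, hev, hod, hmul⟩ := hiso
  have hψ : ∀ x y w : ospSub F p q, jmul (x : MJ F p (2*q)) y = w →
      jmul (e.symm x : MJ F n n) (e.symm y) = (e.symm w : MJ F n n) := by
    intro x y w hw
    have h1 := hmul (e.symm x) (e.symm y) ⟨_, hA.2 _ (e.symm x).2 _ (e.symm y).2⟩ rfl
    rw [e.apply_symm_apply, e.apply_symm_apply, hw] at h1
    have h2 := Subtype.ext h1
    rw [h2, e.symm_apply_apply]
  have hψe : ∀ x : ospSub F p q, (x : MJ F p (2*q)) ∈ evenSub F p (2*q) →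
      (e.symm x : MJ F n n) ∈ evenSub F n n := by
    intro x hx; rw [hev, e.apply_symm_apply]; exact hx
  have hψo : ∀ x : ospSub F p q, (x : MJ F p (2*q)) ∈ oddSub F p (2*q) →
      (e.symm x : MJ F n n) ∈ oddSub F n n := by
    intro x hx; rw [hod, e.apply_symm_apply]; exact hx
  let T : ospSub F p q →ₗ[F] F :=
    { toFun := fun x => ((e.symm x : MJ F n n).toBlocks₁₁).trace
      map_add' := by
        intro x y
        simp only [map_add, Submodule.coe_add]
        exact Matrix.trace_add _ _
      map_smul' := by
        intro c x
        simp only [map_smul, Submodule.coe_smul]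
        exact Matrix.trace_smul c ((e.symm x : MJ F n n).toBlocks₁₁) }
  have hT2 : ∀ x, (e.symm x : MJ F n n).trace = 2 * T x := by
    intro x
    have hq := (hAQ (e.symm x).2).1
    simp only [Matrix.trace, Fintype.sum_sum_type, Matrix.diag_apply, hq]
    exact (two_mul _).symm
  have hidem : ∀ x : ospSub F p q, (x : MJ F p (2*q)) ∈ evenSub F p (2*q) →
      (x : MJ F p (2*q)) * x = x → ∃ r : ℕ, T x = r ∧ r ≤ n ∧ (r = 0 → x = 0) := by
    intro x hx hxx
    have h1 := hψ x x x (by rw [jmul_even_self hx, hxx])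
    rw [jmul_even_self (hψe x hx)] at h1
    have hX := hψe x hx
    have hQ := hAQ (e.symm x).2
    have hb : (e.symm x : MJ F n n) = Matrix.fromBlocks ((e.symm x : MJ F n n).toBlocks₁₁) 0 0
        ((e.symm x : MJ F n n).toBlocks₁₁) := by
      ext i j
      rcases i with i | i <;> rcases j with j | j
      · rfl
      · exact hX _ _ (by simp [pty])
      · exact hX _ _ (by simp [pty])
      · exact hQ.1 i j
    have h2 : (e.symm x : MJ F n n).toBlocks₁₁ * (e.symm x : MJ F n n).toBlocks₁₁ =
        (e.symm x : MJ F n n).toBlocks₁₁ := by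
      have h3 := congrArg Matrix.toBlocks₁₁ h1
      rw [hb, Matrix.fromBlocks_multiply] at h3
      simpa using h3
    refine ⟨_, trace_idem _ h2, ?_, ?_⟩
    · simpa using Matrix.rank_le_card_width (e.symm x : MJ F n n).toBlocks₁₁
    · intro hr
      have h4 : (e.symm x : MJ F n n).toBlocks₁₁ = 0 := rank_zero' _ hr
      rw [h4] at hb
      have h5 : e.symm x = 0 := Subtype.ext (by rw [hb]; simp)
      simpa using h5
  let eo : Fin p → ospSub F p q := fun i => ⟨eE q i, eE_mem i⟩
  let fo : Fin q → ospSub F p q := fun k => ⟨fE p k, fE_mem k⟩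
  have hfe : ∀ i k, T (fo k) = 2 * T (eo i) := by
    intro i k
    have hx : (xE i k : MJ F p (2*q)) ∈ oddSub F p (2*q) := fb_odd _ _
    have hy : (yE i k : MJ F p (2*q)) ∈ oddSub F p (2*q) := fb_odd _ _
    have h1 := hψ ⟨xE i k, xE_mem i k⟩ ⟨yE i k, yE_mem i k⟩
      ((2:F)⁻¹ • ((-2:F) • eo i + fo k)) (by
        rw [jmul_odd hx hy, xy]; rfl)
    rw [jmul_odd (hψo _ hx) (hψo _ hy)] at h1
    have h2 := congrArg Matrix.trace h1
    rw [hT2, Matrix.trace_smul, Matrix.trace_sub, Matrix.trace_mul_comm, sub_self, smul_zero] at h2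
    simp only [map_smul, map_add, smul_eq_mul] at h2
    have h3 : (-2:F) * T (eo i) + T (fo k) = 0 := by
      have : (2:F) * 2⁻¹ = 1 := mul_inv_cancel₀ two_ne_zero
      rw [← mul_assoc, this, one_mul] at h2
      exact h2.symm
    linear_combination h3
  have hE : ∀ i, ∃ r : ℕ, T (eo i) = r ∧ 1 ≤ r := by
    intro i
    obtain ⟨r, h1, -, h2⟩ := hidem (eo i) (fb_even _ _) (eE_sq i)
    refine ⟨r, h1, Nat.one_le_iff_ne_zero.mpr fun h => ?_⟩
    have h3 := congrArg Subtype.val (h2 h)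
    have h4 := congrFun (congrFun h3 (Sum.inl i)) (Sum.inl i)
    simp [eo, eE] at h4
  choose r hr hr1 using hE
  have hev1 : (1 : MJ F p (2*q)) ∈ evenSub F p (2*q) := by
    rw [← Matrix.fromBlocks_one]; exact fb_even _ _
  obtain ⟨s, hs, hsn, -⟩ := hidem ⟨1, one_mem_osp⟩ hev1 (Matrix.one_mul _)
  have hsum : (⟨1, one_mem_osp⟩ : ospSub F p q) = ∑ i, eo i + ∑ k, fo k := by
    apply Subtype.ext
    simp only [Submodule.coe_add, Submodule.coe_sum]
    exact sum_one
  rw [hsum, map_add, map_sum, map_sum] at hs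
  simp only [hfe ⟨0, hp⟩, hr] at hs
  have hs' : ∑ i, r i + ∑ k : Fin q, 2 * r ⟨0, hp⟩ = s := by
    have : ((∑ i, r i + ∑ k : Fin q, 2 * r ⟨0, hp⟩ : ℕ) : F) = (s : F) := by
      push_cast; exact hs
    exact_mod_cast this
  have hN : p + 2 * q ≤ n := by
    have h1 : p ≤ ∑ i, r i := by
      calc p = ∑ i : Fin p, 1 := by simp
        _ ≤ _ := Finset.sum_le_sum fun i _ => hr1 i
    have h2 : 2 * q ≤ ∑ k : Fin q, 2 * r ⟨0, hp⟩ := by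
      have := hr1 ⟨0, hp⟩
      simp only [Finset.sum_const, Finset.card_univ, Fintype.card_fin, smul_eq_mul]
      nlinarith
    omega
  calc Module.finrank F A = Module.finrank F (ospSub F p q) := e.finrank_eq
    _ ≤ (p + 2 * q + 1).choose 2 := finrank_osp p q
    _ ≤ (n + 1).choose 2 := Nat.choose_le_choose 2 (by omega)
    _ = (n ^ 2 + n) / 2 := by
      rw [Nat.choose_two_right]; congr 1; simp; ring

end SJ
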